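/- Let n ≥ 1, let Ω ⊆ ℝⁿ be open, and let I ⊆ ℝ be a compact interval. For each k ∈ ℕ let (Γ_k)^μ_{ρν} : Ω → ℝ be continuous connection coefficients and let Γ^μ_{ρν} : Ω → ℝ be continuous, with sup_{x∈Ω} |(Γ_k)^μ_{ρν}(x) − Γ^μ_{ρν}(x)| → 0 as k → ∞ for all indices. Let γ_k : I → Ω be twice continuously differentiable solutions of the geodesic equation for Γ_k, and let γ : I → ℝⁿ with γ(I) ⊆ Ω and v : I → ℝⁿ be such that sup_{t∈I} |γ_k(t) − γ(t)| → 0 and sup_{t∈I} |γ̇_k(t) − v(t)| → 0 as k → ∞. Then γ is twice continuously differentiable on I with γ̇ = v, and γ solves the geodesic equation for Γ on I: γ̈^μ(t) + Σ_{ρ,ν} Γ^μ_{ρν}(γ(t)) γ̇^ρ(t) γ̇^ν(t) = 0 for all t ∈ I and all μ. -/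

import Mathlib

open Filter Topology in
/-- Uniform convergence to a continuous limit gives joint (continuous) convergence. -/
lemma joint_tendsto_aux {X Y : Type*} [TopologicalSpace X] [PseudoMetricSpace Y]
    {F : ℕ → X → Y} {f : X → Y} {s : Set X} {x : X}
    (h : TendstoUniformlyOn F f atTop s) (hf : ContinuousWithinAt f s x) :
    Tendsto (fun p : ℕ × X => F p.1 p.2) (atTop ×ˢ 𝓝[s] x) (𝓝 (f x)) := by
  rw [Metric.tendsto_nhds]
  intro ε hε
  have h1 := (Metric.tendstoUniformlyOn_iff.1 h) (ε / 2) (half_pos hε)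
  have h2 : ∀ᶠ u in 𝓝[s] x, u ∈ s ∧ dist (f u) (f x) < ε / 2 :=
    (eventually_mem_nhdsWithin).and ((Metric.tendsto_nhds.1 hf) (ε / 2) (half_pos hε))
  filter_upwards [h1.prod_mk h2] with p hp
  have h3 := hp.1 p.2 hp.2.1
  have h4 := hp.2.2
  have h5 := dist_triangle (F p.1 p.2) (f p.2) (f x)
  rw [dist_comm] at h3
  linarith

open Filter Topology in
/-- Limits of derivatives within a compact interval under joint convergence. -/
lemma hasDerivWithinAt_limit_aux {E : Type*} [NormedAddCommGroup E] [NormedSpace ℝ E]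
    {a b : ℝ} {F G : ℕ → ℝ → E} {f : ℝ → E} {t : ℝ} {g : E} (ht : t ∈ Set.Icc a b)
    (hd : ∀ k, ∀ u ∈ Set.Icc a b, HasDerivWithinAt (F k) (G k u) (Set.Icc a b) u)
    (hF : ∀ u ∈ Set.Icc a b, Tendsto (fun k => F k u) atTop (𝓝 (f u)))
    (hG : Tendsto (fun p : ℕ × ℝ => G p.1 p.2) (atTop ×ˢ 𝓝[Set.Icc a b] t) (𝓝 g)) :
    HasDerivWithinAt f g (Set.Icc a b) t := by
  rw [hasDerivWithinAt_iff_isLittleO, Asymptotics.isLittleO_iff]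
  intro ε hε
  have h1 := (Metric.tendsto_nhds.1 hG) ε hε
  obtain ⟨pa, hpa, pb, hpb, hp⟩ := eventually_prod_iff.1 h1
  obtain ⟨δ, hδ, hball⟩ := Metric.mem_nhdsWithin_iff.1 hpb
  have hmem : Metric.ball t δ ∩ Set.Icc a b ∈ 𝓝[Set.Icc a b] t :=
    inter_mem (mem_nhdsWithin_of_mem_nhds (Metric.ball_mem_nhds t hδ)) self_mem_nhdsWithin
  filter_upwards [hmem] with s hs
  have hlim : Tendsto (fun k => ‖F k s - F k t - (s - t) • g‖) atTop
      (𝓝 ‖f s - f t - (s - t) • g‖) :=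
    (((hF s hs.2).sub (hF t ht)).sub tendsto_const_nhds).norm
  refine le_of_tendsto hlim ?_
  filter_upwards [hpa] with k hk
  have hconv : Convex ℝ (Metric.ball t δ ∩ Set.Icc a b) :=
    (convex_ball t δ).inter (convex_Icc a b)
  have key := hconv.norm_image_sub_le_of_norm_hasDerivWithin_le
    (f := fun u => F k u - u • g) (f' := fun u => G k u - (1 : ℝ) • g) (C := ε)
    (x := t) (y := s)
    (fun u hu => ((hd k u hu.2).mono Set.inter_subset_right).sub
      ((hasDerivWithinAt_id u _).smul_const g))
    (fun u hu => by
      have := hp hk (hball hu)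
      rw [dist_eq_norm] at this
      simpa using this.le)
    ⟨Metric.mem_ball_self hδ, ht⟩ hs
  have e : F k s - F k t - (s - t) • g = F k s - s • g - (F k t - t • g) := by
    rw [sub_smul]; abel
  rw [e]
  exact key


/-- Stability of classical geodesics under zero mollification limits: if continuous
connection coefficients `Γ_k` converge uniformly on `Ω` to `Γ`, and C² geodesics `γ_k`
of `Γ_k` on a compact interval `[a,b]` converge in `C¹` (i.e. `γ_k → γ` and
`γ̇_k → v` uniformly on `[a,b]`), then `γ` is a C² curve with `γ̇ = v` solving the
geodesic equation for `Γ` on `[a,b]`. -/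
theorem geodesics_stable_under_uniform_limits
    {n : ℕ} (hn : 1 ≤ n)
    (Ω : Set (EuclideanSpace ℝ (Fin n))) (hΩ : IsOpen Ω)
    (a b : ℝ) (hab : a ≤ b)
    (Γk : ℕ → Fin n → Fin n → Fin n → EuclideanSpace ℝ (Fin n) → ℝ)
    (Γ : Fin n → Fin n → Fin n → EuclideanSpace ℝ (Fin n) → ℝ)
    (hΓk : ∀ k μ ρ ν, ContinuousOn (Γk k μ ρ ν) Ω)
    (hΓ : ∀ μ ρ ν, ContinuousOn (Γ μ ρ ν) Ω)
    (hΓconv : ∀ μ ρ ν, TendstoUniformlyOn (fun k x => Γk k μ ρ ν x) (Γ μ ρ ν)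
      Filter.atTop Ω)
    (γk vk ak : ℕ → ℝ → EuclideanSpace ℝ (Fin n))
    (γ v : ℝ → EuclideanSpace ℝ (Fin n))
    (hγkΩ : ∀ k, ∀ t ∈ Set.Icc a b, γk k t ∈ Ω)
    (hγΩ : ∀ t ∈ Set.Icc a b, γ t ∈ Ω)
    (hdk : ∀ k, ∀ t ∈ Set.Icc a b, HasDerivWithinAt (γk k) (vk k t) (Set.Icc a b) t)
    (hddk : ∀ k, ∀ t ∈ Set.Icc a b, HasDerivWithinAt (vk k) (ak k t) (Set.Icc a b) t)
    (hak : ∀ k, ContinuousOn (ak k) (Set.Icc a b))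
    (hgeok : ∀ k, ∀ t ∈ Set.Icc a b, ∀ μ : Fin n,
      ak k t μ + (∑ ρ : Fin n, ∑ ν : Fin n,
        Γk k μ ρ ν (γk k t) * vk k t ρ * vk k t ν) = 0)
    (hγconv : TendstoUniformlyOn (fun k t => γk k t) γ Filter.atTop (Set.Icc a b))
    (hvconv : TendstoUniformlyOn (fun k t => vk k t) v Filter.atTop (Set.Icc a b)) :
    (∀ t ∈ Set.Icc a b, HasDerivWithinAt γ (v t) (Set.Icc a b) t) ∧
    ∃ w : ℝ → EuclideanSpace ℝ (Fin n),
      ContinuousOn w (Set.Icc a b) ∧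
      (∀ t ∈ Set.Icc a b, HasDerivWithinAt v (w t) (Set.Icc a b) t) ∧
      (∀ t ∈ Set.Icc a b, ∀ μ : Fin n,
        w t μ + (∑ ρ : Fin n, ∑ ν : Fin n,
          Γ μ ρ ν (γ t) * v t ρ * v t ν) = 0) := by


  have hγc : ContinuousOn γ (Set.Icc a b) :=
    hγconv.continuousOn (Filter.Frequently.of_forall fun k t ht => (hdk k t ht).continuousWithinAt)
  have hvc : ContinuousOn v (Set.Icc a b) :=
    hvconv.continuousOn (Filter.Frequently.of_forall fun k t ht => (hddk k t ht).continuousWithinAt)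
  have hγj := fun t ht => joint_tendsto_aux hγconv (hγc t ht)
  have hvj := fun t ht => joint_tendsto_aux hvconv (hvc t ht)
  refine ⟨fun t ht => hasDerivWithinAt_limit_aux ht hdk
    (fun u hu => hγconv.tendsto_at hu) (hvj t ht), ?_⟩
  have hcoord : ∀ i : Fin n, Continuous fun x : EuclideanSpace ℝ (Fin n) => x i :=
    fun i => by fun_prop
  refine ⟨fun t => WithLp.toLp 2 fun μ => -(∑ ρ : Fin n, ∑ ν : Fin n,
    Γ μ ρ ν (γ t) * v t ρ * v t ν), ?_, ?_, ?_⟩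
  · refine (PiLp.continuous_toLp 2 _).comp_continuousOn (continuousOn_pi.2 fun μ => ?_)
    refine (continuousOn_finsetSum _ fun ρ _ => continuousOn_finsetSum _ fun ν _ => ?_).neg
    exact (((hΓ μ ρ ν).comp hγc hγΩ).mul ((hcoord ρ).comp_continuousOn hvc)).mul
      ((hcoord ν).comp_continuousOn hvc)
  · intro t ht
    refine hasDerivWithinAt_limit_aux ht hddk (fun u hu => hvconv.tendsto_at hu) ?_
    have hlim : Filter.Tendsto (fun p : ℕ × ℝ => (WithLp.toLp 2 fun μ =>
        -(∑ ρ : Fin n, ∑ ν : Fin n, Γk p.1 μ ρ ν (γk p.1 p.2) * vk p.1 p.2 ρ * vk p.1 p.2 ν) :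
          EuclideanSpace ℝ (Fin n)))
        (Filter.atTop ×ˢ nhdsWithin t (Set.Icc a b)) (nhds (WithLp.toLp 2 fun μ =>
        -(∑ ρ : Fin n, ∑ ν : Fin n, Γ μ ρ ν (γ t) * v t ρ * v t ν))) := by
      refine ((PiLp.continuous_toLp 2 _).tendsto _).comp (tendsto_pi_nhds.2 fun μ => ?_)
      refine (tendsto_finsetSum _ fun ρ _ => tendsto_finsetSum _ fun ν _ => ?_).neg
      have hc : ∀ i : Fin n, Filter.Tendsto (fun p : ℕ × ℝ => vk p.1 p.2 i)
          (Filter.atTop ×ˢ nhdsWithin t (Set.Icc a b)) (nhds (v t i)) :=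
        fun i => ((hcoord i).tendsto _).comp (hvj t ht)
      refine Filter.Tendsto.mul (Filter.Tendsto.mul ?_ (hc ρ)) (hc ν)
      refine (joint_tendsto_aux (hΓconv μ ρ ν) (hΓ μ ρ ν _ (hγΩ t ht))).comp
        (Filter.tendsto_fst.prodMk (tendsto_nhdsWithin_iff.2 ⟨hγj t ht, ?_⟩))
      filter_upwards [Filter.tendsto_snd.eventually
        (eventually_mem_nhdsWithin (a := t) (s := Set.Icc a b))] with p hp
      exact hγkΩ p.1 p.2 hp
    refine hlim.congr' ?_
    filter_upwards [Filter.tendsto_snd.eventually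
      (eventually_mem_nhdsWithin (a := t) (s := Set.Icc a b))] with p hp
    ext μ
    have := hgeok p.1 p.2 hp μ
    change -(∑ ρ : Fin n, ∑ ν : Fin n,
      Γk p.1 μ ρ ν (γk p.1 p.2) * vk p.1 p.2 ρ * vk p.1 p.2 ν) = ak p.1 p.2 μ
    linarith
  · intro t ht μ
    exact neg_add_cancel _
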